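/- Let S be an inverse semigroup with zero. The map σ : E(S) → Set Ω given by σ(e) = Ω_e is a tight representation of the semilattice E(S) in the Boolean algebra of all subsets of Ω: it satisfies σ(0) = ∅, σ(e*f) = σ(e) ∩ σ(f), and for all finite subsets X, Y ⊆ E(S) and every finite cover Z of E(S)^{X,Y}, (⋂_{x∈X} σ x) ∩ (⋂_{y∈Y} (σ y)ᶜ) ⊆ ⋃_{z∈Z} σ z. -/

import Mathlib

/-- An inverse semigroup with zero: every element `s` has a unique generalized
inverse `star s`, and `0` is absorbing. -/
class InverseSemigroupWithZero (S : Type*) extends Semigroup S, Zero S, Star S where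
  zero_mul : ∀ s : S, 0 * s = 0
  mul_zero : ∀ s : S, s * 0 = 0
  mul_star_mul_self : ∀ s : S, s * star s * s = s
  star_mul_self_star : ∀ s : S, star s * s * star s = star s
  star_unique : ∀ s x : S, s * x * s = s → x * s * x = x → x = star s

variable {S : Type*} [InverseSemigroupWithZero S]

/-- The natural partial order on an inverse semigroup: `s ≤ t` iff `t * s⋆ * s = s`. -/
def natLe (s t : S) : Prop := t * star s * s = s

/-- A filter in the inverse semigroup `S` (w.r.t. the natural partial order). -/
def IsFilterS (ξ : Set S) : Prop :=
  ξ.Nonempty ∧ (0 : S) ∉ ξ ∧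
    (∀ x ∈ ξ, ∀ y : S, natLe x y → y ∈ ξ) ∧
    ∀ x ∈ ξ, ∀ y ∈ ξ, ∃ z ∈ ξ, natLe z x ∧ natLe z y

/-- An ultrafilter: a filter maximal under inclusion. -/
def IsUltraS (ξ : Set S) : Prop :=
  IsFilterS ξ ∧ ∀ η : Set S, IsFilterS η → ξ ⊆ η → η = ξ

/-- The set `Ω` of all ultrafilters in `S`. -/
def OmegaAll (S : Type*) [InverseSemigroupWithZero S] : Set (Set S) := {ξ | IsUltraS ξ}

/-- `Ω_e`: the set of ultrafilters `ξ` with `eξ ⊆ ξ`. -/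
def OmegaE (e : S) : Set (Set S) := {ξ | IsUltraS ξ ∧ ∀ t ∈ ξ, e * t ∈ ξ}

/-- The map `λₛ` on filters. -/
def lambdaMap (s : S) (ξ : Set S) : Set S := {u | ∃ t ∈ ξ, natLe (s * t) u}

/-- `y` is dense in `x` (for idempotents `y ≤ x`): there is no nonzero idempotent
`z ≤ x` with `z * y = 0`. -/
def DenseIn (y x : S) : Prop :=
  ∀ z : S, IsIdempotentElem z → z * x = z → z * y = 0 → z = 0

/-- `s` essentially coincides with `t`. -/
def EssEq (s t : S) : Prop :=
  star s * s = star t * t ∧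
    ∀ f : S, IsIdempotentElem f → f ≠ 0 → f * (star s * s) = f →
      ∃ e : S, IsIdempotentElem e ∧ e ≠ 0 ∧ e * f = e ∧ s * e = t * e

/-- The set `E(S)^{X,Y}` of idempotents below every member of `X` and disjoint
from every member of `Y`. -/
def eSXY (X Y : Finset S) : Set S :=
  {z | IsIdempotentElem z ∧ (∀ x ∈ X, z * x = z) ∧ ∀ y ∈ Y, z * y = 0}

/-- `Z` is a cover for `F ⊆ E(S)`. -/
def IsCoverS (Z F : Set S) : Prop :=
  Z ⊆ F ∧ ∀ x ∈ F, x ≠ 0 → ∃ z ∈ Z, z * x ≠ 0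

/-!
A filter `ξ` is invariant under left multiplication by `s` as soon as `s * t = t` for a single
`t ∈ ξ`. If `ξ` is an ultrafilter and `e` is an idempotent with `ξ ∉ Ω_e`, then `λ_e ξ ⊇ ξ` cannot
be a filter, so `e * t = 0` for some `t ∈ ξ`. Both `s * t = t` and `e * t = 0` pass to smaller `t`,
so if `ξ` belonged to all `Ω_x`, to no `Ω_y` and to no `Ω_z`, then one `t ∈ ξ` would be fixed by
every `x` and killed by every `y` and `z`: the idempotent `t * t⋆ ≠ 0` would lie in `E(S)^{X,Y}`
and escape the cover `Z`.
-/

namespace InverseSemigroupWithZero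

instance : InvolutiveStar S where
  star_involutive s := (star_unique _ _ (star_mul_self_star s) (mul_star_mul_self s)).symm

theorem star_eq_self {e : S} (he : IsIdempotentElem e) : star e = e :=
  have h : e * e * e = e := by rw [he.eq, he.eq]
  (star_unique e e h h).symm

theorem isIdempotentElem_mul_star_self (s : S) : IsIdempotentElem (s * star s) := by
  rw [isIdempotentElem_iff, ← mul_assoc, mul_star_mul_self]

theorem isIdempotentElem_star_mul_self (s : S) : IsIdempotentElem (star s * s) := by
  rw [isIdempotentElem_iff, ← mul_assoc, star_mul_self_star]

theorem mul_star_self_ne_zero {s : S} (hs : s ≠ 0) : s * star s ≠ 0 := fun h =>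
  hs (by rw [← mul_star_mul_self s, h, zero_mul])

theorem mul_star_mul_mul_eq_star {e f : S} (he : IsIdempotentElem e) (hf : IsIdempotentElem f) :
    f * star (e * f) * e = star (e * f) := by
  apply star_unique
  · calc e * f * (f * star (e * f) * e) * (e * f)
        = e * (f * f) * star (e * f) * (e * e * f) := by simp only [mul_assoc]
      _ = e * f := by rw [he.eq, hf.eq, mul_star_mul_self]
  · calc f * star (e * f) * e * (e * f) * (f * star (e * f) * e)
        = f * (star (e * f) * (e * e * (f * f)) * star (e * f)) * e := by simp only [mul_assoc]
      _ = f * star (e * f) * e := by rw [he.eq, hf.eq, star_mul_self_star]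

theorem isIdempotentElem_mul {e f : S} (he : IsIdempotentElem e) (hf : IsIdempotentElem f) :
    IsIdempotentElem (e * f) := by
  have hstar : IsIdempotentElem (star (e * f)) := by
    calc star (e * f) * star (e * f)
        = f * star (e * f) * e * (f * star (e * f) * e) := by rw [mul_star_mul_mul_eq_star he hf]
      _ = f * (star (e * f) * (e * f) * star (e * f)) * e := by simp only [mul_assoc]
      _ = star (e * f) := by rw [star_mul_self_star, mul_star_mul_mul_eq_star he hf]
  rwa [← star_eq_self hstar, star_star] at hstar

theorem commute_of_isIdempotentElem {e f : S} (he : IsIdempotentElem e)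
    (hf : IsIdempotentElem f) : Commute e f := by
  have mul_swap_mul {a b : S} (ha : IsIdempotentElem a) (hb : IsIdempotentElem b) :
      a * b * (b * a) * (a * b) = a * b := by
    calc a * b * (b * a) * (a * b) = a * (b * b) * (a * a * b) := by simp only [mul_assoc]
      _ = a * b := by rw [ha.eq, hb.eq, (isIdempotentElem_mul ha hb).eq]
  calc e * f = star (e * f) := (star_eq_self (isIdempotentElem_mul he hf)).symm
    _ = f * e := (star_unique _ _ (mul_swap_mul he hf) (mul_swap_mul hf he)).symm

theorem mul_mul_star_mul_star_mul_mul (s t : S) :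
    s * t * (star t * star s) * (s * t) = s * t := by
  calc s * t * (star t * star s) * (s * t)
      = s * ((t * star t) * (star s * s)) * t := by simp only [mul_assoc]
    _ = s * ((star s * s) * (t * star t)) * t := by
      rw [(commute_of_isIdempotentElem (isIdempotentElem_mul_star_self t)
        (isIdempotentElem_star_mul_self s)).eq]
    _ = (s * star s * s) * (t * star t * t) := by simp only [mul_assoc]
    _ = s * t := by rw [mul_star_mul_self, mul_star_mul_self]

instance : StarMul S where
  star_mul s t := by
    refine (star_unique _ _ (mul_mul_star_mul_star_mul_mul s t) ?_).symm
    simpa only [star_star] using mul_mul_star_mul_star_mul_mul (star t) (star s)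

end InverseSemigroupWithZero

open InverseSemigroupWithZero hiding zero_mul mul_zero

theorem natLe_refl (s : S) : natLe s s := mul_star_mul_self s

theorem mul_natLe_of_isIdempotentElem_right (t : S) {e : S} (he : IsIdempotentElem e) :
    natLe (t * e) t := by
  calc t * star (t * e) * (t * e) = t * (e * (star t * t)) * e := by
        simp only [star_mul, star_eq_self he, mul_assoc]
    _ = (t * star t * t) * (e * e) := by
        rw [(commute_of_isIdempotentElem he (isIdempotentElem_star_mul_self t)).eq]
        simp only [mul_assoc]
    _ = t * e := by rw [mul_star_mul_self, he.eq]

theorem mul_natLe_of_isIdempotentElem_left (t : S) {e : S} (he : IsIdempotentElem e) :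
    natLe (e * t) t := by
  calc t * star (e * t) * (e * t) = t * star t * (e * e) * t := by
        simp only [star_mul, star_eq_self he, mul_assoc]
    _ = e * (t * star t * t) := by
        rw [he.eq, (commute_of_isIdempotentElem (isIdempotentElem_mul_star_self t) he).eq]
        simp only [mul_assoc]
    _ = e * t := by rw [mul_star_mul_self]

theorem natLe_iff_exists_eq_mul {s t : S} :
    natLe s t ↔ ∃ e, IsIdempotentElem e ∧ s = t * e := by
  constructor
  · intro h
    exact ⟨star s * s, isIdempotentElem_star_mul_self s, by rw [← mul_assoc]; exact h.symm⟩
  · rintro ⟨e, he, rfl⟩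
    exact mul_natLe_of_isIdempotentElem_right t he

namespace natLe

theorem trans {s t u : S} (hst : natLe s t) (htu : natLe t u) : natLe s u := by
  obtain ⟨e, he, rfl⟩ := natLe_iff_exists_eq_mul.1 hst
  obtain ⟨f, hf, rfl⟩ := natLe_iff_exists_eq_mul.1 htu
  rw [mul_assoc]
  exact mul_natLe_of_isIdempotentElem_right u (isIdempotentElem_mul hf he)

theorem mul_left (a : S) {s t : S} (h : natLe s t) : natLe (a * s) (a * t) := by
  obtain ⟨e, he, rfl⟩ := natLe_iff_exists_eq_mul.1 h
  rw [← mul_assoc]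
  exact mul_natLe_of_isIdempotentElem_right _ he

theorem mul_eq_self {a s t : S} (h : natLe s t) (hat : a * t = t) : a * s = s := by
  obtain ⟨e, -, rfl⟩ := natLe_iff_exists_eq_mul.1 h
  rw [← mul_assoc, hat]

theorem mul_eq_zero {a s t : S} (h : natLe s t) (hat : a * t = 0) : a * s = 0 := by
  obtain ⟨e, -, rfl⟩ := natLe_iff_exists_eq_mul.1 h
  rw [← mul_assoc, hat, InverseSemigroupWithZero.zero_mul]

theorem mul_star_mul_eq {s t : S} (h : natLe s t) : s * star s * t = s := by
  obtain ⟨e, he, rfl⟩ := natLe_iff_exists_eq_mul.1 h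
  calc t * e * star (t * e) * t = t * (e * e * (star t * t)) := by
        simp only [star_mul, star_eq_self he, mul_assoc]
    _ = (t * star t * t) * e := by
        rw [he.eq, (commute_of_isIdempotentElem he (isIdempotentElem_star_mul_self t)).eq]
        simp only [mul_assoc]
    _ = t * e := by rw [mul_star_mul_self]

end natLe

theorem mul_eq_left_of_mul_eq_right {e s : S} (he : IsIdempotentElem e) (h : s * e = e) :
    e * s = e := by
  have hle : natLe e s := h ▸ mul_natLe_of_isIdempotentElem_right s he
  simpa only [star_eq_self he, he.eq] using hle.mul_star_mul_eq

theorem mul_star_self_mem_eSXY {X Y : Finset S} {t : S} (hX : ∀ x ∈ X, x * t = t)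
    (hY : ∀ y ∈ Y, IsIdempotentElem y) (hYt : ∀ y ∈ Y, y * t = 0) : t * star t ∈ eSXY X Y := by
  have ht : IsIdempotentElem (t * star t) := isIdempotentElem_mul_star_self t
  refine ⟨ht, fun x hx => mul_eq_left_of_mul_eq_right ht ?_, fun y hy => ?_⟩
  · rw [← mul_assoc, hX x hx]
  · rw [(commute_of_isIdempotentElem ht (hY y hy)).eq, ← mul_assoc, hYt y hy,
      InverseSemigroupWithZero.zero_mul]

namespace IsFilterS

variable {ξ : Set S}

theorem nonempty (hξ : IsFilterS ξ) : ξ.Nonempty := hξ.1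

theorem ne_zero (hξ : IsFilterS ξ) {s : S} (hs : s ∈ ξ) : s ≠ 0 := fun h => hξ.2.1 (h ▸ hs)

theorem mem_of_natLe (hξ : IsFilterS ξ) {s t : S} (hs : s ∈ ξ) (hst : natLe s t) : t ∈ ξ :=
  hξ.2.2.1 s hs t hst

theorem exists_natLe_natLe (hξ : IsFilterS ξ) {s t : S} (hs : s ∈ ξ) (ht : t ∈ ξ) :
    ∃ u ∈ ξ, natLe u s ∧ natLe u t :=
  hξ.2.2.2 s hs t ht

theorem exists_mul_eq_self (hξ : IsFilterS ξ) {s t : S} (ht : t ∈ ξ) (hst : s * t ∈ ξ) :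
    ∃ u ∈ ξ, s * u = u := by
  obtain ⟨u, hu, hut, hust⟩ := hξ.exists_natLe_natLe ht hst
  refine ⟨u, hu, ?_⟩
  calc s * u = s * (t * (star u * u)) := by rw [← mul_assoc t, hut]
    _ = s * t * star u * u := by simp only [mul_assoc]
    _ = u := hust

theorem mul_mem_of_mul_eq_self (hξ : IsFilterS ξ) {s t u : S} (hu : u ∈ ξ) (hsu : s * u = u)
    (ht : t ∈ ξ) : s * t ∈ ξ := by
  obtain ⟨v, hv, hvu, hvt⟩ := hξ.exists_natLe_natLe hu ht
  refine hξ.mem_of_natLe hv ?_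
  simpa only [hvu.mul_eq_self hsu] using hvt.mul_left s

theorem exists_mem_forall {ι : Type*} (hξ : IsFilterS ξ) {A : Finset ι} {P : ι → S → Prop}
    (hP : ∀ i s t, natLe s t → P i t → P i s) (hA : ∀ i ∈ A, ∃ t ∈ ξ, P i t) :
    ∃ t ∈ ξ, ∀ i ∈ A, P i t := by
  have hdir : DirectedOn (fun s t => {i | P i s} ⊆ {i | P i t}) ξ := by
    intro s hs t ht
    obtain ⟨u, hu, hus, hut⟩ := hξ.exists_natLe_natLe hs ht
    exact ⟨u, hu, fun i => hP i u s hus, fun i => hP i u t hut⟩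
  exact hdir.exists_mem_subset_of_finset_subset_biUnion hξ.nonempty
    fun i hi =>
      let ⟨_, ht, hPt⟩ := hA i hi
      Set.mem_biUnion ht hPt

theorem lambdaMap (hξ : IsFilterS ξ) {s : S} (hs : ∀ t ∈ ξ, s * t ≠ 0) :
    IsFilterS (lambdaMap s ξ) := by
  refine ⟨?_, ?_, ?_, ?_⟩
  · obtain ⟨t, ht⟩ := hξ.nonempty
    exact ⟨s * t, t, ht, natLe_refl _⟩
  · rintro ⟨t, ht, hst⟩
    obtain ⟨e, -, hste⟩ := natLe_iff_exists_eq_mul.1 hst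
    exact hs t ht (hste.trans (InverseSemigroupWithZero.zero_mul e))
  · rintro u ⟨t, ht, hstu⟩ v huv
    exact ⟨t, ht, hstu.trans huv⟩
  · rintro u ⟨t, ht, hstu⟩ u' ⟨t', ht', hstu'⟩
    obtain ⟨v, hv, hvt, hvt'⟩ := hξ.exists_natLe_natLe ht ht'
    exact ⟨s * v, ⟨v, hv, natLe_refl _⟩, (hvt.mul_left s).trans hstu,
      (hvt'.mul_left s).trans hstu'⟩

end IsFilterS

theorem subset_lambdaMap {e : S} (he : IsIdempotentElem e) (ξ : Set S) : ξ ⊆ lambdaMap e ξ :=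
  fun t ht => ⟨t, ht, mul_natLe_of_isIdempotentElem_left t he⟩

theorem mem_OmegaE_iff {s : S} {ξ : Set S} :
    ξ ∈ OmegaE s ↔ IsUltraS ξ ∧ ∃ t ∈ ξ, s * t = t := by
  constructor
  · rintro ⟨hξ, hs⟩
    obtain ⟨t, ht⟩ := hξ.1.nonempty
    exact ⟨hξ, hξ.1.exists_mul_eq_self ht (hs t ht)⟩
  · rintro ⟨hξ, u, hu, hsu⟩
    exact ⟨hξ, fun t ht => hξ.1.mul_mem_of_mul_eq_self hu hsu ht⟩

namespace IsUltraS

variable {ξ : Set S}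

theorem exists_mul_eq_zero (hξ : IsUltraS ξ) {e : S} (he : IsIdempotentElem e)
    (hξe : ξ ∉ OmegaE e) : ∃ t ∈ ξ, e * t = 0 := by
  by_contra! hne
  have hmax : lambdaMap e ξ = ξ := hξ.2 _ (hξ.1.lambdaMap hne) (subset_lambdaMap he ξ)
  refine hξe ⟨hξ, fun t ht => ?_⟩
  rw [← hmax]
  exact ⟨t, ht, natLe_refl _⟩

theorem exists_mul_eq_self_and_mul_eq_zero (hξ : IsUltraS ξ) {X W : Finset S}
    (hX : ∀ x ∈ X, ξ ∈ OmegaE x) (hW : ∀ w ∈ W, IsIdempotentElem w)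
    (hWξ : ∀ w ∈ W, ξ ∉ OmegaE w) :
    ∃ t ∈ ξ, (∀ x ∈ X, x * t = t) ∧ ∀ w ∈ W, w * t = 0 := by
  obtain ⟨u, hu, hXu⟩ := hξ.1.exists_mem_forall (P := fun x t => x * t = t)
    (fun _ _ _ => natLe.mul_eq_self) fun x hx => (mem_OmegaE_iff.1 (hX x hx)).2
  obtain ⟨v, hv, hWv⟩ := hξ.1.exists_mem_forall (P := fun w t => w * t = 0)
    (fun _ _ _ => natLe.mul_eq_zero) fun w hw => hξ.exists_mul_eq_zero (hW w hw) (hWξ w hw)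
  obtain ⟨t, ht, htu, htv⟩ := hξ.1.exists_natLe_natLe hu hv
  exact ⟨t, ht, fun x hx => htu.mul_eq_self (hXu x hx), fun w hw => htv.mul_eq_zero (hWv w hw)⟩

end IsUltraS

theorem OmegaE_zero : OmegaE (0 : S) = ∅ := by
  refine Set.eq_empty_of_forall_notMem fun ξ hξ => ?_
  obtain ⟨hξ, t, ht, h⟩ := mem_OmegaE_iff.1 hξ
  exact hξ.1.ne_zero ht (h.symm.trans (InverseSemigroupWithZero.zero_mul t))

theorem OmegaE_mul {e : S} (he : IsIdempotentElem e) (s : S) :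
    OmegaE (e * s) = OmegaE e ∩ OmegaE s := by
  refine Set.Subset.antisymm (fun ξ hξ => ?_) ?_
  · obtain ⟨hξ, t, ht, hest⟩ := mem_OmegaE_iff.1 hξ
    rw [mul_assoc] at hest
    have het : e * t = t := by rw [← hest, he.mul_self_mul]
    have hst : s * t ∈ ξ := hξ.1.mem_of_natLe ht (by
      simpa only [hest] using mul_natLe_of_isIdempotentElem_left (s * t) he)
    exact ⟨mem_OmegaE_iff.2 ⟨hξ, t, ht, het⟩,
      mem_OmegaE_iff.2 ⟨hξ, hξ.1.exists_mul_eq_self ht hst⟩⟩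
  · rintro ξ ⟨⟨hξ, heξ⟩, -, hsξ⟩
    exact ⟨hξ, fun t ht => by rw [mul_assoc]; exact heξ _ (hsξ t ht)⟩

theorem exists_mem_OmegaE_of_isCoverS {X Y Z : Finset S} {ξ : Set S} (hξ : IsUltraS ξ)
    (hY : ∀ y ∈ Y, IsIdempotentElem y) (hZ : IsCoverS (↑Z) (eSXY X Y))
    (hXξ : ∀ x ∈ X, ξ ∈ OmegaE x) (hYξ : ∀ y ∈ Y, ξ ∉ OmegaE y) : ∃ z ∈ Z, ξ ∈ OmegaE z := by
  classical
  by_contra! hZξ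
  obtain ⟨t, ht, hXt, hYZt⟩ := hξ.exists_mul_eq_self_and_mul_eq_zero (W := Y ∪ Z) hXξ
    (Finset.forall_mem_union.2 ⟨hY, fun z hz => (hZ.1 hz).1⟩)
    (Finset.forall_mem_union.2 ⟨hYξ, hZξ⟩)
  obtain ⟨hYt, hZt⟩ := Finset.forall_mem_union.1 hYZt
  obtain ⟨z, hz, hzt⟩ := hZ.2 _ (mul_star_self_mem_eSXY hXt hY hYt)
    (mul_star_self_ne_zero (hξ.1.ne_zero ht))
  exact hzt (by rw [← mul_assoc, hZt z hz, InverseSemigroupWithZero.zero_mul])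

theorem regular_representation_tight_general (S : Type*) [InverseSemigroupWithZero S] :
    OmegaE (0 : S) = ∅ ∧
      (∀ e s : S, IsIdempotentElem e → OmegaE (e * s) = OmegaE e ∩ OmegaE s) ∧
      ∀ X Y Z : Finset S, (∀ y ∈ Y, IsIdempotentElem y) → IsCoverS (↑Z) (eSXY X Y) →
        (OmegaAll S ∩ (⋂ x ∈ X, OmegaE x)) ∩ (⋂ y ∈ Y, OmegaAll S \ OmegaE y) ⊆
          ⋃ z ∈ Z, OmegaE z := by
  refine ⟨OmegaE_zero, fun e s he => OmegaE_mul he s, ?_⟩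
  rintro X Y Z hY hZ ξ ⟨⟨hξ, hXξ⟩, hYξ⟩
  rw [Set.mem_iInter₂] at hXξ hYξ
  obtain ⟨z, hz, hξz⟩ := exists_mem_OmegaE_of_isCoverS hξ hY hZ hXξ fun y hy => (hYξ y hy).2
  exact Set.mem_biUnion hz hξz

theorem regular_representation_tight (S : Type*) [InverseSemigroupWithZero S] :
    OmegaE (0 : S) = ∅ ∧
      (∀ e f : S, IsIdempotentElem e → IsIdempotentElem f →
        OmegaE (e * f) = OmegaE e ∩ OmegaE f) ∧
      ∀ X Y Z : Finset S, (∀ x ∈ X, IsIdempotentElem x) → (∀ y ∈ Y, IsIdempotentElem y) →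
        IsCoverS (↑Z) (eSXY X Y) →
        (OmegaAll S ∩ (⋂ x ∈ X, OmegaE x)) ∩ (⋂ y ∈ Y, OmegaAll S \ OmegaE y) ⊆
          ⋃ z ∈ Z, OmegaE z := by
  obtain ⟨hzero, hmul, hcover⟩ := regular_representation_tight_general S
  exact ⟨hzero, fun e f he _ => hmul e f he, fun X Y Z _ => hcover X Y Z⟩
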